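/- For α > 2 and |δ| ≤ (1/(2α))·exp(1 - α/2), the function c(u,v) = 1 + δ·α²·(1-2u)(1-2v)·exp(α(u-u²+v-v²)) is nonnegative for all (u,v) ∈ [0,1]². -/

import Mathlib

theorem stmt_6 (α δ : ℝ) (hα : α > 2) (hδ : |δ| ≤ (1/(2*α)) * Real.exp (1 - α/2)) :
    ∀ u ∈ Set.Icc (0:ℝ) 1, ∀ v ∈ Set.Icc (0:ℝ) 1,
      1 + δ * α^2 * (1 - 2*u) * (1 - 2*v) * Real.exp (α * (u - u^2 + v - v^2)) ≥ 0 := by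
  intro u _ v _
  have hα0 : 0 < α := by linarith
  set t : ℝ := α * ((1-2*u)^2 + (1-2*v)^2) / 4 with ht
  have h1 : t ≤ Real.exp (t - 1) := by
    have := Real.add_one_le_exp (t - 1)
    linarith
  have h2 : |(1-2*u)*(1-2*v)| ≤ (2/α) * Real.exp (t-1) := by
    have h3 : |(1-2*u)*(1-2*v)| ≤ ((1-2*u)^2 + (1-2*v)^2)/2 := by
      rw [abs_le]
      constructor <;> nlinarith [sq_nonneg ((1-2*u)+(1-2*v)), sq_nonneg ((1-2*u)-(1-2*v))]
    have h4 : ((1-2*u)^2 + (1-2*v)^2)/2 = (2/α) * t := by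
      rw [ht]; field_simp; ring
    rw [h4] at h3
    exact h3.trans (mul_le_mul_of_nonneg_left h1 (by positivity))
  have h5 : |δ * α^2 * (1 - 2*u) * (1 - 2*v) * Real.exp (α * (u - u^2 + v - v^2))| ≤ 1 := by
    calc _ = |δ| * |(1-2*u)*(1-2*v)| * (α^2 * Real.exp (α * (u - u^2 + v - v^2))) := by
          rw [← abs_mul, ← abs_of_pos (show 0 < α^2 * Real.exp (α * (u - u^2 + v - v^2)) by positivity),
            ← abs_mul]
          congr 1; ring
      _ ≤ ((1/(2*α)) * Real.exp (1 - α/2)) * ((2/α) * Real.exp (t-1)) *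
            (α^2 * Real.exp (α * (u - u^2 + v - v^2))) := by
          gcongr
      _ = Real.exp (1 - α/2) * Real.exp (t-1) * Real.exp (α * (u - u^2 + v - v^2)) := by
          field_simp
      _ = 1 := by
          rw [← Real.exp_add, ← Real.exp_add, Real.exp_eq_one_iff, ht]; ring
  linarith [(abs_le.mp h5).1]
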